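/- arXiv:2302.06024 — 6 statements merged into one kernel-verified Lean document; each statement's English description precedes it below -/
import Mathlib

section
/- Let 𝔤 be a Lie algebra over ℝ, X ∈ 𝔤, (𝔤^(i))_{i≥0} the weight filtration associated to X, and (𝔤^[i])_{i≥1} the lower central series. Then 𝔤^[i] ⊆ 𝔤^(i) for every i ≥ 1, and 𝔤^(2i) ⊆ 𝔤^[i+1] for every i ≥ 1. In particular, if 𝔤 is nilpotent of class at most s (i.e. 𝔤^[s+1] = 0) then 𝔤^(2s) = 0. -/
/-!
Both inclusions come from monotonicity of `⁅𝔤, ·⁆`. The lower central series only uses the summand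
`⁅𝔤, 𝔤⁽ⁱ⁾⁆` of the weight filtration, whence `𝔤^[i] ⊆ 𝔤⁽ⁱ⁾`. Conversely `⁅X, S⁆ ⊆ ⁅𝔤, S⁆`, so two
steps of the weight filtration descend at least one step of the lower central series. Since
`𝔤⁽ⁱ⁺²⁾` involves the two preceding terms, the even and odd terms are bounded together:
`𝔤⁽²ⁱ⁾, 𝔤⁽²ⁱ⁺¹⁾ ⊆ 𝔤^[i+1]` (`weightFiltration_le_lowerCentral`). The odd case also uses that the
lower central series is decreasing.
-/

variable {L : Type*} [LieRing L] [LieAlgebra ℝ L]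

/-- The linear span of all brackets `⁅x, y⁆` with `x ∈ A` and `y ∈ B`. -/
def bracketSpan (A B : Submodule ℝ L) : Submodule ℝ L :=
  Submodule.span ℝ {z : L | ∃ x ∈ A, ∃ y ∈ B, z = ⁅x, y⁆}

/-- The linear span of all brackets `⁅X, y⁆` with `y ∈ S`. -/
def adSpan (X : L) (S : Submodule ℝ L) : Submodule ℝ L :=
  Submodule.span ℝ {z : L | ∃ y ∈ S, z = ⁅X, y⁆}

/-- The weight filtration of a Lie algebra associated to `X`:
`𝔤⁽⁰⁾ = 𝔤⁽¹⁾ = 𝔤` and `𝔤⁽ⁱ⁺¹⁾ = ⁅𝔤, 𝔤⁽ⁱ⁾⁆ + ⁅X, 𝔤⁽ⁱ⁻¹⁾⁆` for `i ≥ 1`. -/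
def weightFiltration (X : L) : ℕ → Submodule ℝ L
  | 0 => ⊤
  | 1 => ⊤
  | (i + 2) =>
      bracketSpan (⊤ : Submodule ℝ L) (weightFiltration X (i + 1)) ⊔
        adSpan X (weightFiltration X i)


/-- The lower central series: `𝔤^[1] = 𝔤` and `𝔤^[i+1] = ⁅𝔤, 𝔤^[i]⁆`
(`lowerCentral L 0` is a junk value equal to `𝔤`). -/
def lowerCentral (L : Type*) [LieRing L] [LieAlgebra ℝ L] : ℕ → Submodule ℝ L
  | 0 => ⊤
  | 1 => ⊤
  | (i + 2) => bracketSpan (⊤ : Submodule ℝ L) (lowerCentral L (i + 1))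

theorem bracketSpan_top_mono {A B : Submodule ℝ L} (h : A ≤ B) :
    bracketSpan (⊤ : Submodule ℝ L) A ≤ bracketSpan ⊤ B := by
  refine Submodule.span_mono ?_
  rintro z ⟨x, hx, y, hy, rfl⟩
  exact ⟨x, hx, y, h hy, rfl⟩

theorem adSpan_le_bracketSpan_top (X : L) {A B : Submodule ℝ L} (h : A ≤ B) :
    adSpan X A ≤ bracketSpan ⊤ B := by
  refine Submodule.span_mono ?_
  rintro z ⟨y, hy, rfl⟩
  exact ⟨X, Submodule.mem_top, y, h hy, rfl⟩

theorem lowerCentral_succ_le (i : ℕ) : lowerCentral L (i + 2) ≤ lowerCentral L (i + 1) := by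
  induction i with
  | zero => exact le_top
  | succ i ih => exact bracketSpan_top_mono ih

theorem lowerCentral_succ_le_weightFiltration (X : L) (i : ℕ) :
    lowerCentral L (i + 1) ≤ weightFiltration X (i + 1) := by
  induction i with
  | zero => exact le_top
  | succ i ih => exact (bracketSpan_top_mono ih).trans le_sup_left

/-- The even and odd terms are bounded simultaneously, as the recursion for the weight filtration
has depth two. -/
theorem weightFiltration_le_lowerCentral (X : L) (i : ℕ) :
    weightFiltration X (2 * i) ≤ lowerCentral L (i + 1) ∧
      weightFiltration X (2 * i + 1) ≤ lowerCentral L (i + 1) := by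
  induction i with
  | zero => exact ⟨le_top, le_top⟩
  | succ i ih =>
    have h : weightFiltration X (2 * i + 2) ≤ lowerCentral L (i + 2) :=
      sup_le (bracketSpan_top_mono ih.2) (adSpan_le_bracketSpan_top X ih.1)
    exact ⟨h, sup_le (bracketSpan_top_mono (h.trans (lowerCentral_succ_le i)))
      (adSpan_le_bracketSpan_top X ih.2)⟩

/-- `𝔤^[i] ⊆ 𝔤⁽ⁱ⁾` for `i ≥ 1`, `𝔤⁽²ⁱ⁾ ⊆ 𝔤^[i+1]` for `i ≥ 1`, and if `𝔤^[s+1] = 0`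
then `𝔤⁽²ˢ⁾ = 0`. -/
theorem lowerCentral_le_weightFiltration (X : L) :
    (∀ i : ℕ, 1 ≤ i → lowerCentral L i ≤ weightFiltration X i) ∧
    (∀ i : ℕ, 1 ≤ i → weightFiltration X (2 * i) ≤ lowerCentral L (i + 1)) ∧
    (∀ s : ℕ, lowerCentral L (s + 1) = ⊥ → weightFiltration X (2 * s) = ⊥) := by
  refine ⟨fun i hi => ?_, fun i _ => (weightFiltration_le_lowerCentral X i).1, fun s hs => ?_⟩
  · obtain ⟨j, rfl⟩ := Nat.exists_eq_add_of_le' hi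
    exact lowerCentral_succ_le_weightFiltration X j
  · exact le_bot_iff.mp (hs ▸ (weightFiltration_le_lowerCentral X s).1)
end

section
/- Let 𝔤 be a Lie algebra over ℝ and X, X' ∈ 𝔤 with X' − X ∈ ⁅𝔤, 𝔤⁆ (the span of all brackets). Then the weight filtration associated to X coincides with the weight filtration associated to X': for every i ≥ 0, 𝔤_X^(i) = 𝔤_{X'}^(i). In other words, the weight filtration depends only on the class of X in 𝔤/⁅𝔤, 𝔤⁆. -/
/-!
Write `F i` for the weight filtration of `X`. Always `⁅L, F i⁆ ≤ F (i + 1)`, so the Jacobi identity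
`⁅⁅a, b⁆, y⁆ = ⁅a, ⁅b, y⁆⁆ - ⁅b, ⁅a, y⁆⁆` gives `⁅⁅L, L⁆, F i⁆ ≤ ⁅L, F (i + 1)⁆`
(`lie_mem_bracketSpan_succ`). Replacing `X` by `X'` with `X' - X ∈ ⁅L, L⁆` therefore changes
`⁅X, y⁆`, for `y ∈ F i`, only by an element of a summand already present in `F (i + 2)`. Induction
gives one inclusion (`weightFiltration_le`), and the hypothesis is symmetric in `X` and `X'`.
-/

variable {L : Type*} [LieRing L] [LieAlgebra ℝ L]

theorem lie_mem_weightFiltration_succ (X b : L) (i : ℕ) {y : L}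
    (hy : y ∈ weightFiltration X i) : ⁅b, y⁆ ∈ weightFiltration X (i + 1) := by
  cases i with
  | zero => exact Submodule.mem_top
  | succ i =>
    exact Submodule.mem_sup_left (Submodule.subset_span ⟨b, Submodule.mem_top, y, hy, rfl⟩)

theorem lie_mem_bracketSpan_succ (X : L) (i : ℕ) {d y : L}
    (hd : d ∈ bracketSpan (⊤ : Submodule ℝ L) (⊤ : Submodule ℝ L))
    (hy : y ∈ weightFiltration X i) :
    ⁅d, y⁆ ∈ bracketSpan (⊤ : Submodule ℝ L) (weightFiltration X (i + 1)) := by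
  unfold bracketSpan at hd
  induction hd using Submodule.span_induction with
  | mem z hz =>
    obtain ⟨a, -, b, -, rfl⟩ := hz
    rw [lie_lie]
    exact Submodule.sub_mem _
      (Submodule.subset_span
        ⟨a, Submodule.mem_top, _, lie_mem_weightFiltration_succ X b i hy, rfl⟩)
      (Submodule.subset_span
        ⟨b, Submodule.mem_top, _, lie_mem_weightFiltration_succ X a i hy, rfl⟩)
  | zero => rw [zero_lie]; exact Submodule.zero_mem _
  | add u v _ _ hu hv => rw [add_lie]; exact Submodule.add_mem _ hu hv
  | smul c u _ hu => rw [smul_lie]; exact Submodule.smul_mem _ c hu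

theorem weightFiltration_le (X X' : L)
    (h : X' - X ∈ bracketSpan (⊤ : Submodule ℝ L) (⊤ : Submodule ℝ L)) (i : ℕ) :
    weightFiltration X' i ≤ weightFiltration X i := by
  induction i using Nat.twoStepInduction with
  | zero => exact le_rfl
  | one => exact le_rfl
  | more i ih₀ ih₁ =>
    refine sup_le (Submodule.span_le.2 ?_) (Submodule.span_le.2 ?_)
    · rintro _ ⟨x, -, y, hy, rfl⟩
      exact lie_mem_weightFiltration_succ X x (i + 1) (ih₁ hy)
    · rintro _ ⟨y, hy, rfl⟩
      have hsplit : ⁅X', y⁆ = ⁅X' - X, y⁆ + ⁅X, y⁆ := by rw [sub_lie, sub_add_cancel]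
      rw [hsplit]
      exact Submodule.add_mem_sup (lie_mem_bracketSpan_succ X i h (ih₀ hy))
        (Submodule.subset_span ⟨y, ih₀ hy, rfl⟩)

/-- The weight filtration depends only on the class of `X` modulo `⁅𝔤, 𝔤⁆`. -/
theorem weightFiltration_congr (X X' : L)
    (h : X' - X ∈ bracketSpan (⊤ : Submodule ℝ L) (⊤ : Submodule ℝ L)) :
    ∀ i : ℕ, weightFiltration X i = weightFiltration X' i := by
  intro i
  have h' : X - X' ∈ bracketSpan (⊤ : Submodule ℝ L) (⊤ : Submodule ℝ L) := by
    rw [← neg_sub]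
    exact Submodule.neg_mem _ h
  exact le_antisymm (weightFiltration_le X' X h' i) (weightFiltration_le X X' h i)
end

section
/- Let B ≥ 1, V = V_1 ⊕ ⋯ ⊕ V_B a direct sum of finite-dimensional real inner product spaces, t ≥ 1, b ≥ 1, and let M be a monomial of weight b on V^t with statistics M^∞. Let m ≥ 1 be an integer and let μ be a probability measure on V with finite moment of order 2mb and with ∫_V x^(1) dμ(x) = 0. Then there exists a constant C (depending on m, M and μ but not on N) such that for every N ≥ 1, ∫_{V^N} (M^∞(x_1, …, x_N))^{2m} dμ^{⊗N}(x_1, …, x_N) ≤ C · N^{bm}. -/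
/-!
Expanding the `2m`-th power turns the integral into a sum, over maps
`g : Fin (2m) × Fin t → Fin N`, of the integrals of `∏ (l, j), m_j (x_{g (l, j)})`. By independence
each of these factors as a product over `n : Fin N` of integrals of `∏_{g (l, j) = n} m_j`.

* If some value `n` of `g` carries total weight one, its fibre is a single `m_j` that is one linear
  form on the weight-one component, so the integral vanishes by centering. Otherwise every value
  carries weight at least two; the total weight being `2mb`, `g` takes at most `mb` values
  (`integral_prod_comp`).
* There are at most `C * N ^ (mb)` such maps `g` (`card_image_le_count`).
* With the gauge `R x = 1 + ∑ ‖x⁽ⁱ⁾‖ ^ (1 / i)` a monomial of weight `w` is `O(R ^ w)`,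
  and the moment hypothesis says exactly that `R ^ (2mb)` is integrable. Hence the nonzero terms
  are bounded uniformly in `g` and `N`.
-/

open MeasureTheory

/-- A monomial of weight `wt` on `V^t`, where `V = V_0 ⊕ ⋯ ⊕ V_{B-1}` is a graded real
vector space in which the component `V i` carries the weight `i + 1`. It is a product
`M(x_1, …, x_t) = ∏_j m_j(x_j)` where each `m_j` is a (nonempty) product of coordinate
functionals, i.e. of linear forms factoring through a single coordinate projection, and
the total weight of all functionals involved equals `wt`. -/
structure Monomial (B : ℕ) (V : Fin B → Type*) [∀ i, NormedAddCommGroup (V i)]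
    [∀ i, InnerProductSpace ℝ (V i)] (t : ℕ) (wt : ℕ) where
  factors : Fin t → List ((i : Fin B) × (V i →ₗ[ℝ] ℝ))
  factors_ne : ∀ j, factors j ≠ []
  weight_eq : (∑ j : Fin t, ((factors j).map fun p => (p.1 : ℕ) + 1).sum) = wt

namespace Monomial

variable {B : ℕ} {V : Fin B → Type*} [∀ i, NormedAddCommGroup (V i)]
  [∀ i, InnerProductSpace ℝ (V i)] {t wt : ℕ}

/-- Evaluation of a monomial on a `t`-tuple of vectors. -/
def eval (M : Monomial B V t wt) (x : Fin t → ∀ i, V i) : ℝ :=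
  ∏ j : Fin t, ((M.factors j).map fun p => p.2 (x j p.1)).prod

open scoped Classical in
/-- The statistics `M^∞(x_1, …, x_N) = ∑_{n_1 < ⋯ < n_t ≤ N} M(x_{n_1}, …, x_{n_t})`. -/
noncomputable def statistics (M : Monomial B V t wt) {N : ℕ}
    (x : Fin N → ∀ i, V i) : ℝ :=
  ∑ f ∈ Finset.univ.filter fun f : Fin t → Fin N => StrictMono f,
    M.eval fun j => x (f j)

end Monomial

/-- A measure `μ` on `V = V_0 ⊕ ⋯ ⊕ V_{B-1}` has a finite moment of order `q` if
`∫ ‖x⁽ᵇ⁾‖^{q/b} dμ(x) < ∞` for every weight `b = 1, …, B`. -/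
def HasFiniteMoment {B : ℕ} {V : Fin B → Type*} [∀ i, NormedAddCommGroup (V i)]
    [∀ i, MeasurableSpace (V i)] (μ : Measure (∀ i, V i)) (q : ℝ) : Prop :=
  ∀ i : Fin B, Integrable (fun x : ∀ i, V i => ‖x i‖ ^ (q / ((i : ℕ) + 1 : ℝ))) μ

/-! ### Maps with few values -/

open Finset in
/-- A map with at most `k` values factors through `Fin k`, which bounds the number of such maps. -/
lemma card_image_le_count {ι : Type*} [Fintype ι] [DecidableEq ι] (N k : ℕ) (hN : 1 ≤ N) :
    #{g : ι → Fin N | #(univ.image g) ≤ k} ≤ k ^ Fintype.card ι * N ^ k := by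
  have hsub : ({g : ι → Fin N | #(univ.image g) ≤ k} : Finset (ι → Fin N)) ⊆
      (univ : Finset ((ι → Fin k) × (Fin k → Fin N))).image fun p => p.2 ∘ p.1 := by
    intro g hg
    have hg' : #(univ.image g) ≤ k := by simpa using hg
    obtain ⟨e⟩ : Nonempty ((univ.image g : Finset (Fin N)) ↪ Fin k) :=
      Function.Embedding.nonempty_of_card_le (by rwa [Fintype.card_coe, Fintype.card_fin])
    refine mem_image.2 ⟨(fun i => e ⟨g i, mem_image_of_mem _ (mem_univ i)⟩,
      Function.extend e Subtype.val fun _ => ⟨0, hN⟩), mem_univ _, ?_⟩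
    funext i
    simp [e.injective.extend_apply]
  refine (card_le_card hsub).trans (card_image_le.trans ?_)
  simp

/-! ### Products of independent factors -/

open Finset in
/-- The integral of a product of functions of independent variables: it is bounded uniformly in the
assignment `g` of variables to factors, and it vanishes unless every variable that occurs carries
total weight at least two. -/
lemma integral_prod_comp {X ι : Type*} [MeasurableSpace X] (μ : Measure X)
    [IsProbabilityMeasure μ] [Fintype ι] [DecidableEq ι] (h : ι → X → ℝ)
    (hmeas : ∀ i, Measurable (h i)) (w : ι → ℕ) (hw : ∀ i, 1 ≤ w i)
    (R : X → ℝ) (hR : ∀ x, 1 ≤ R x) (K : ℝ) (hK : 1 ≤ K)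
    (hbd : ∀ i x, |h i x| ≤ K * R x ^ w i)
    (hint : Integrable (fun x => R x ^ (∑ i, w i)) μ)
    (hc : ∀ i, w i = 1 → ∫ x, h i x ∂μ = 0) {N : ℕ} (g : ι → Fin N) :
    Integrable (fun x : Fin N → X => ∏ i, h i (x (g i))) (Measure.pi fun _ => μ) ∧
    (∫ x : Fin N → X, ∏ i, h i (x (g i)) ∂(Measure.pi fun _ => μ)) ≤
      if 2 * #(univ.image g) ≤ ∑ i, w i then
        (K * ∫ x, R x ^ (∑ i, w i) ∂μ) ^ Fintype.card ι else 0 := by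
  set q := ∑ i, w i with hq
  set A := ∫ x, R x ^ q ∂μ with hA
  have hA1 : 1 ≤ A := by
    have : ∫ _x : X, (1 : ℝ) ∂μ ≤ A :=
      integral_mono (integrable_const _) hint fun x => one_le_pow₀ (hR x)
    simpa using this
  have hfac : ∀ x : Fin N → X, ∏ i, h i (x (g i)) = ∏ n, ∏ i with g i = n, h i (x n) := by
    intro x
    rw [← prod_fiberwise univ g]
    refine prod_congr rfl fun n _ => prod_congr rfl fun i hi => ?_
    rw [(mem_filter.1 hi).2]
  have hSbd : ∀ (S : Finset ι) (x : X), |∏ i ∈ S, h i x| ≤ K ^ #S * R x ^ q := by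
    intro S x
    rw [abs_prod]
    calc ∏ i ∈ S, |h i x| ≤ ∏ i ∈ S, (K * R x ^ w i) :=
          prod_le_prod (fun _ _ => abs_nonneg _) fun i _ => hbd i x
      _ = K ^ #S * R x ^ (∑ i ∈ S, w i) := by
          rw [prod_mul_distrib, prod_const, prod_pow_eq_pow_sum]
      _ ≤ K ^ #S * R x ^ q := by
          gcongr
          · exact hR x
          · exact sum_le_sum_of_subset (subset_univ S)
  have hSint : ∀ S : Finset ι, Integrable (fun x => ∏ i ∈ S, h i x) μ := fun S =>
    (hint.const_mul (K ^ #S)).mono'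
      (Finset.measurable_fun_prod S fun i _ => hmeas i).aestronglyMeasurable
      (Filter.Eventually.of_forall fun x => by simpa only [Real.norm_eq_abs] using hSbd S x)
  have hSle : ∀ S : Finset ι, |∫ x, ∏ i ∈ S, h i x ∂μ| ≤ (K * A) ^ #S := by
    intro S
    rcases S.eq_empty_or_nonempty with rfl | hS
    · simp
    calc |∫ x, ∏ i ∈ S, h i x ∂μ| ≤ ∫ x, |∏ i ∈ S, h i x| ∂μ := abs_integral_le_integral_abs
      _ ≤ ∫ x, K ^ #S * R x ^ q ∂μ :=
          integral_mono (hSint S).abs (hint.const_mul _) (hSbd S)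
      _ = K ^ #S * A := integral_const_mul _ _
      _ ≤ (K * A) ^ #S := by
          rw [mul_pow]
          gcongr
          exact le_self_pow₀ hA1 hS.card_pos.ne'
  simp_rw [hfac]
  refine ⟨Integrable.fintype_prod fun n => hSint _, ?_⟩
  rw [integral_fintype_prod_eq_prod (fun n x => ∏ i with g i = n, h i x)]
  split_ifs with hcard
  · refine (le_abs_self _).trans ?_
    rw [abs_prod]
    refine (prod_le_prod (fun _ _ => abs_nonneg _) fun n _ => hSle _).trans ?_
    rw [prod_pow_eq_pow_sum, sum_card_fiberwise_eq_card_filter]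
    simp
  · -- By pigeonhole some occurring variable has weight less than two.
    obtain ⟨n, hn, hlt⟩ : ∃ n ∈ univ.image g, ∑ i with g i = n, w i < 2 := by
      by_contra! hcon
      apply hcard
      rw [hq, ← sum_fiberwise_of_maps_to (g := g) (t := univ.image g)
        (fun i _ => mem_image_of_mem _ (mem_univ i)), mul_comm, ← smul_eq_mul]
      exact card_nsmul_le_sum _ _ _ hcon
    obtain ⟨i, -, rfl⟩ := mem_image.1 hn
    have hmem : i ∈ univ.filter fun j => g j = g i := by simp
    have hsum := add_sum_erase _ w hmem
    have hcle : _ ≤ ∑ x ∈ _, w x := card_nsmul_le_sum ((univ.filter fun j => g j = g i).erase i) w 1 fun j _ => hw j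
    have hwi := hw i
    rw [smul_eq_mul, mul_one] at hcle
    have hempty : (univ.filter fun j => g j = g i).erase i = ∅ := by
      rw [← card_eq_zero]; omega
    have hsing : (univ.filter fun j => g j = g i) = {i} := by
      rw [← insert_erase hmem, hempty]; rfl
    refine (prod_eq_zero (mem_univ (g i)) ?_).le
    rw [hsing]
    simpa using hc i (by omega)

/-! ### The gauge and bounds on monomials -/

section Gauge

variable {B : ℕ} {V : Fin B → Type*} [∀ i, NormedAddCommGroup (V i)]

/-- The gauge `1 + ∑ ‖x⁽ⁱ⁾‖ ^ (1 / i)`, a size adapted to the grading. The summand `1` makes its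
powers monotone in the exponent. The component with index `i : Fin B` has weight `i + 1`. -/
noncomputable def weightGauge (x : ∀ i, V i) : ℝ := 1 + ∑ i : Fin B, ‖x i‖ ^ (((i : ℕ) + 1 : ℝ)⁻¹)

lemma one_le_weightGauge (x : ∀ i, V i) : 1 ≤ weightGauge x :=
  le_add_of_nonneg_right (Finset.sum_nonneg fun _ _ => by positivity)

lemma norm_le_weightGauge_pow (x : ∀ i, V i) (i : Fin B) : ‖x i‖ ≤ weightGauge x ^ ((i : ℕ) + 1) := by
  have h1 : ‖x i‖ ^ (((i : ℕ) + 1 : ℝ)⁻¹) ≤ weightGauge x := by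
    refine (Finset.single_le_sum (f := fun i : Fin B => ‖x i‖ ^ (((i : ℕ) + 1 : ℝ)⁻¹))
      (fun _ _ => by positivity) (Finset.mem_univ i)).trans ?_
    simp [weightGauge]
  calc ‖x i‖ = (‖x i‖ ^ (((i : ℕ) + 1 : ℝ)⁻¹)) ^ ((i : ℕ) + 1) := by
        have := Real.rpow_inv_natCast_pow (norm_nonneg (x i)) (Nat.succ_ne_zero (i : ℕ))
        push_cast at this
        exact this.symm
    _ ≤ _ := by gcongr

/-- Finiteness of the moment of order `q` is integrability of the `q`-th power of the gauge. -/
lemma integrable_weightGauge_pow [∀ i, MeasurableSpace (V i)] [∀ i, BorelSpace (V i)]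
    (μ : Measure (∀ i, V i)) [IsProbabilityMeasure μ] (q : ℕ) (hq : q ≠ 0)
    (hmom : HasFiniteMoment μ (q : ℝ)) : Integrable (fun x => weightGauge x ^ q) μ := by
  have hmeas : ∀ i : Fin B,
      Measurable fun x : ∀ i, V i => ‖x i‖ ^ (((i : ℕ) + 1 : ℝ)⁻¹) := fun i =>
    ((measurable_pi_apply i).norm).pow_const _
  have hmem : ∀ i : Fin B,
      MemLp (fun x : ∀ i, V i => ‖x i‖ ^ (((i : ℕ) + 1 : ℝ)⁻¹)) (q : ENNReal) μ := by
    intro i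
    rw [← integrable_norm_rpow_iff (hmeas i).aestronglyMeasurable (by exact_mod_cast hq)
      (ENNReal.natCast_ne_top q)]
    refine (hmom i).congr (Filter.Eventually.of_forall fun x => ?_)
    simp only [ENNReal.toReal_natCast]
    rw [Real.norm_of_nonneg (by positivity), ← Real.rpow_mul (norm_nonneg _), div_eq_inv_mul]
  have hsum : MemLp (fun x : ∀ i, V i => weightGauge x) (q : ENNReal) μ :=
    (memLp_const (1 : ℝ)).add (memLp_finsetSum Finset.univ fun i _ => hmem i)
  refine (hsum.integrable_norm_pow hq).congr (Filter.Eventually.of_forall fun x => ?_)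
  simp only
  rw [Real.norm_of_nonneg (zero_le_one.trans (one_le_weightGauge x))]

variable [∀ i, InnerProductSpace ℝ (V i)]

lemma one_le_weight (l : List ((i : Fin B) × (V i →ₗ[ℝ] ℝ))) (hl : l ≠ []) :
    1 ≤ (l.map fun p => (p.1 : ℕ) + 1).sum := by
  obtain ⟨p, l, rfl⟩ := List.exists_cons_of_ne_nil hl
  simp only [List.map_cons, List.sum_cons]
  omega

variable [∀ i, FiniteDimensional ℝ (V i)]

lemma exists_factor_bound (l : List ((i : Fin B) × (V i →ₗ[ℝ] ℝ))) :
    ∃ K : ℝ, 1 ≤ K ∧ ∀ x : ∀ i, V i, |(l.map fun p => p.2 (x p.1)).prod| ≤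
      K * weightGauge x ^ (l.map fun p => (p.1 : ℕ) + 1).sum := by
  induction l with
  | nil => exact ⟨1, le_rfl, fun x => by simp⟩
  | cons p l ih =>
    obtain ⟨K, hK, hbd⟩ := ih
    obtain ⟨i, φ⟩ := p
    set c := ‖LinearMap.toContinuousLinearMap φ‖ with hc
    have hc0 : 0 ≤ c := norm_nonneg _
    refine ⟨(1 + c) * K, by nlinarith, fun x => ?_⟩
    have hφ : |φ (x i)| ≤ (1 + c) * weightGauge x ^ ((i : ℕ) + 1) := by
      have h1 := (LinearMap.toContinuousLinearMap φ).le_opNorm (x i)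
      rw [Real.norm_eq_abs, LinearMap.coe_toContinuousLinearMap', ← hc] at h1
      have h2 := norm_le_weightGauge_pow x i
      have h3 := norm_nonneg (x i)
      nlinarith [mul_le_mul_of_nonneg_left h2 hc0]
    simp only [List.map_cons, List.prod_cons, List.sum_cons, abs_mul]
    calc |φ (x i)| * |(l.map fun p => p.2 (x p.1)).prod|
        ≤ ((1 + c) * weightGauge x ^ ((i : ℕ) + 1)) *
          (K * weightGauge x ^ (l.map fun p => (p.1 : ℕ) + 1).sum) :=
          mul_le_mul hφ (hbd x) (abs_nonneg _) ((abs_nonneg _).trans hφ)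
      _ = _ := by rw [pow_add]; ring

lemma measurable_factor [∀ i, MeasurableSpace (V i)] [∀ i, BorelSpace (V i)]
    (l : List ((i : Fin B) × (V i →ₗ[ℝ] ℝ))) :
    Measurable fun x : ∀ i, V i => (l.map fun p => p.2 (x p.1)).prod := by
  induction l with
  | nil => simp
  | cons p l ih =>
    simp only [List.map_cons, List.prod_cons]
    exact ((LinearMap.continuous_of_finiteDimensional p.2).measurable.comp
      (measurable_pi_apply p.1)).mul ih

/-- A factor of weight one is a single linear form on the centered component. -/
lemma integral_factor_eq_zero [∀ i, MeasurableSpace (V i)] [∀ i, BorelSpace (V i)] (hB : 0 < B)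
    (μ : Measure (∀ i, V i)) (hi : Integrable (fun x : ∀ i, V i => x ⟨0, hB⟩) μ)
    (hcent : (∫ x, x ⟨0, hB⟩ ∂μ) = 0)
    (l : List ((i : Fin B) × (V i →ₗ[ℝ] ℝ))) (hl : (l.map fun p => (p.1 : ℕ) + 1).sum = 1) :
    ∫ x, (l.map fun p => p.2 (x p.1)).prod ∂μ = 0 := by
  match l, hl with
  | [], hl => simp at hl
  | p :: p' :: l, hl => simp only [List.map_cons, List.sum_cons] at hl; omega
  | [⟨i, φ⟩], hl =>
    obtain rfl : i = ⟨0, hB⟩ := by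
      ext
      simpa using hl
    simp only [List.map_cons, List.map_nil, List.prod_cons, List.prod_nil, mul_one]
    have := (LinearMap.toContinuousLinearMap φ).integral_comp_comm hi
    simp only [LinearMap.coe_toContinuousLinearMap'] at this
    rw [this, hcent, map_zero]

end Gauge

/-! ### The moment estimate -/

/-- Moment estimate: if `μ` is centered in weight 1 and has a finite moment of order
`2mb`, then `∫ (M^∞)^{2m} dμ^{⊗N} ≤ C ⬝ N^{bm}` for a constant `C` independent of `N`. -/
theorem moment_estimate {B : ℕ} (hB : 0 < B) (V : Fin B → Type*)
    [∀ i, NormedAddCommGroup (V i)] [∀ i, InnerProductSpace ℝ (V i)]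
    [∀ i, FiniteDimensional ℝ (V i)] [∀ i, MeasurableSpace (V i)] [∀ i, BorelSpace (V i)]
    (t b : ℕ) (ht : 1 ≤ t) (hb : 1 ≤ b) (M : Monomial B V t b)
    (m : ℕ) (hm : 1 ≤ m)
    (μ : Measure (∀ i, V i)) [IsProbabilityMeasure μ]
    (hmom : HasFiniteMoment μ (2 * m * b : ℕ))
    (hcent : (∫ x, x ⟨0, hB⟩ ∂μ) = 0) :
    ∃ C : ℝ, ∀ N : ℕ, 1 ≤ N →
      (∫ x, M.statistics x ^ (2 * m) ∂(Measure.pi fun _ : Fin N => μ)) ≤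
        C * (N : ℝ) ^ (b * m) := by
  classical
  have hq : 2 * m * b ≠ 0 := by positivity
  have hgauge := integrable_weightGauge_pow μ _ hq hmom
  have hcentInt : Integrable (fun x : ∀ i, V i => x ⟨0, hB⟩) μ := by
    refine hgauge.mono' (measurable_pi_apply _).aestronglyMeasurable
      (Filter.Eventually.of_forall fun x => (norm_le_weightGauge_pow x _).trans ?_)
    exact pow_le_pow_right₀ (one_le_weightGauge x) (by simpa using Nat.one_le_iff_ne_zero.2 hq)
  choose K hK1 hKbd using fun j => exists_factor_bound (M.factors j)
  have hKle : ∀ j, K j ≤ 1 + ∑ j, K j := fun j =>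
    (Finset.single_le_sum (fun i _ => zero_le_one.trans (hK1 i)) (Finset.mem_univ j)).trans
      (by simp)
  have hK : 1 ≤ 1 + ∑ j, K j :=
    le_add_of_nonneg_right (Finset.sum_nonneg fun i _ => zero_le_one.trans (hK1 i))
  set K' := 1 + ∑ j, K j
  let w : Fin (2 * m) × Fin t → ℕ := fun p => ((M.factors p.2).map fun p => (p.1 : ℕ) + 1).sum
  let h : Fin (2 * m) × Fin t → (∀ i, V i) → ℝ :=
    fun p x => ((M.factors p.2).map fun p => p.2 (x p.1)).prod
  have hwsum : ∑ p, w p = 2 * m * b := by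
    rw [Fintype.sum_prod_type]
    simp only [w, M.weight_eq, Finset.sum_const, Finset.card_univ, Fintype.card_fin, smul_eq_mul]
  have key := fun (N : ℕ) (g : Fin (2 * m) × Fin t → Fin N) =>
    integral_prod_comp μ h (fun p => measurable_factor _) w
      (fun p => one_le_weight _ (M.factors_ne p.2)) weightGauge one_le_weightGauge K' hK
      (fun p x => (hKbd p.2 x).trans (by
        have := one_le_weightGauge x
        gcongr
        exact hKle p.2))
      (by rw [hwsum]; exact hgauge)
      (fun p hp => integral_factor_eq_zero hB μ hcentInt hcent _ hp) g
  set D := (K' * ∫ x, weightGauge x ^ (∑ p, w p) ∂μ) ^ Fintype.card (Fin (2 * m) × Fin t) with hD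
  have hD0 : 0 ≤ D := by
    have : 0 ≤ ∫ x, weightGauge x ^ (∑ p, w p) ∂μ :=
      integral_nonneg fun x => pow_nonneg (zero_le_one.trans (one_le_weightGauge x)) _
    positivity
  refine ⟨((b * m : ℕ) : ℝ) ^ Fintype.card (Fin (2 * m) × Fin t) * D, fun N hN => ?_⟩
  let F : Finset (Fin t → Fin N) := Finset.univ.filter fun f => StrictMono f
  have hexp : ∀ x : Fin N → ∀ i, V i, M.statistics x ^ (2 * m) =
      ∑ f ∈ Fintype.piFinset fun _ : Fin (2 * m) => F,
        ∏ p : Fin (2 * m) × Fin t, h p (x (Function.uncurry f p)) := by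
    intro x
    have h1 : M.statistics x = ∑ f ∈ F, M.eval fun j => x (f j) := by
      simp only [Monomial.statistics, F]
    rw [h1, ← Fin.prod_const, Finset.prod_univ_sum]
    refine Finset.sum_congr rfl fun f _ => ?_
    rw [Fintype.prod_prod_type]
    rfl
  simp_rw [hexp]
  rw [integral_finsetSum _ fun f _ => (key N _).1]
  let G : (Fin (2 * m) × Fin t → Fin N) → ℝ := fun g =>
    if (Finset.univ.image g).card ≤ b * m then D else 0
  have hG0 : ∀ g, 0 ≤ G g := fun g => by
    simp only [G]; split_ifs <;> simp [hD0]
  calc _ ≤ ∑ f ∈ Fintype.piFinset fun _ : Fin (2 * m) => F, G (Function.uncurry f) := by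
        refine Finset.sum_le_sum fun f _ => (key N (Function.uncurry f)).2.trans_eq ?_
        simp only [G]
        refine if_congr ?_ rfl rfl
        rw [hwsum, mul_assoc, mul_comm m b]
        omega
    _ ≤ ∑ f : Fin (2 * m) → Fin t → Fin N, G (Function.uncurry f) :=
        Finset.sum_le_sum_of_subset_of_nonneg (Finset.subset_univ _) fun _ _ _ => hG0 _
    _ = ∑ g, G g := (Equiv.curry (Fin (2 * m)) (Fin t) (Fin N)).symm.sum_comp G
    _ = (Finset.univ.filter fun g : Fin (2 * m) × Fin t → Fin N =>
          (Finset.univ.image g).card ≤ b * m).card * D := by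
        simp only [G]
        rw [← Finset.sum_filter, Finset.sum_const, nsmul_eq_mul]
    _ ≤ (((b * m) ^ Fintype.card (Fin (2 * m) × Fin t) * N ^ (b * m) : ℕ) : ℝ) * D := by
        gcongr
        exact card_image_le_count N (b * m) hN
    _ = _ := by push_cast; ring
end

section
/- Let B ≥ 1, V = V_1 ⊕ ⋯ ⊕ V_B a direct sum of finite-dimensional real inner product spaces, q ∈ [2, ∞), and let μ be a probability measure on V with finite moment of order q. For N ≥ 1 let T_N μ denote the truncation of μ at level N. Then the total variation distance between the product measures μ^{⊗N} and (T_N μ)^{⊗N} on V^N is o(N^{−q/2 + 1}) as N → ∞; that is, N^{q/2 − 1} · sup_A |μ^{⊗N}(A) − (T_N μ)^{⊗N}(A)| → 0 as N → ∞, where the supremum is over measurable subsets A of V^N. -/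
/-!
The proof couples the two product measures. Under `μ^{⊗N}`, applying the truncation coordinatewise
produces a sample of `(T_N μ)^{⊗N}` (`Measure.pi_map_pi`), and the two samples differ only if some
coordinate is moved by `T_N`. By a union bound the total variation distance is therefore at most
`N · ∑ b, μ(‖x⁽ᵇ⁾‖ > N^{b/2})` (`abs_pi_sub_pi_map_le`, `measureReal_ne_truncMap_le`). Markov's
inequality restricted to the tail bounds each summand by
`N^{-q/2} · ∫_{‖x⁽ᵇ⁾‖ > N^{b/2}} ‖x⁽ᵇ⁾‖^{q/b} dμ` (`rpow_mul_tail_le`), and this tail integral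
tends to `0` since the moment is finite (`tendsto_tail_integral`).
-/

open MeasureTheory

open scoped Classical in
/-- The truncation map at level `N'` adapted to `μ`: the component of weight `b` is kept
if its norm is `≤ N'^{b/2}` and replaced by `0` otherwise when `b ≥ 2`; for `b = 1` it is
replaced by the constant `c_{N'}` making the weight-1 component of the truncated measure
centered. -/
noncomputable def truncMap {B : ℕ} {V : Fin B → Type*} [∀ i, NormedAddCommGroup (V i)]
    [∀ i, InnerProductSpace ℝ (V i)] [∀ i, MeasurableSpace (V i)]
    (μ : Measure (∀ i, V i)) (N' : ℝ) (x : ∀ i, V i) : ∀ i, V i :=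
  fun i =>
    if ‖x i‖ ≤ N' ^ ((((i : ℕ) : ℝ) + 1) / 2) then x i
    else if (i : ℕ) = 0 then
      (-((μ {y | N' ^ ((((i : ℕ) : ℝ) + 1) / 2) < ‖y i‖}).toReal)⁻¹) •
        ∫ y in {y | ‖y i‖ ≤ N' ^ ((((i : ℕ) : ℝ) + 1) / 2)}, y i ∂μ
    else 0

/-- The tail event `{‖x⁽ᵇ⁾‖ > t^{b/2}}`, with `b = i + 1`, outside which the component of index
`i` is left unchanged by truncation at level `t`. -/
def tailSet {B : ℕ} {V : Fin B → Type*} [∀ i, NormedAddCommGroup (V i)]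
    (i : Fin B) (t : ℝ) : Set (∀ i, V i) :=
  {x | t ^ ((((i : ℕ) : ℝ) + 1) / 2) < ‖x i‖}

section

variable {B : ℕ} {V : Fin B → Type*} [∀ i, NormedAddCommGroup (V i)]
  [∀ i, MeasurableSpace (V i)]

theorem measureReal_ne_truncMap_le [∀ i, InnerProductSpace ℝ (V i)]
    (μ : Measure (∀ i, V i)) [IsProbabilityMeasure μ] (t : ℝ) :
    μ.real {x | truncMap μ t x ≠ x} ≤ ∑ i, μ.real (tailSet i t) := by
  refine (measureReal_mono ?_).trans (measureReal_iUnion_fintype_le _)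
  intro x hx
  by_contra h
  refine hx (funext fun i => if_pos ?_)
  simp only [Set.mem_iUnion, tailSet, Set.mem_ofPred_eq, not_exists, not_lt] at h
  exact h i

variable [∀ i, BorelSpace (V i)]

theorem measurableSet_tailSet (i : Fin B) (t : ℝ) :
    MeasurableSet (tailSet (V := V) i t) :=
  measurableSet_lt measurable_const (measurable_pi_apply i).norm

theorem measurable_truncMap [∀ i, InnerProductSpace ℝ (V i)]
    (μ : Measure (∀ i, V i)) (t : ℝ) : Measurable (truncMap μ t) := by
  refine measurable_pi_lambda _ fun i => ?_
  unfold truncMap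
  refine Measurable.ite (measurableSet_le (measurable_pi_apply i).norm measurable_const)
    (measurable_pi_apply i) ?_
  split_ifs <;> exact measurable_const

theorem tendsto_tail_integral (μ : Measure (∀ i, V i)) (q : ℝ) (hmom : HasFiniteMoment μ q)
    (i : Fin B) :
    Filter.Tendsto (fun N : ℕ => ∫ x in tailSet i (N : ℝ), ‖x i‖ ^ (q / ((i : ℕ) + 1 : ℝ)) ∂μ)
      Filter.atTop (nhds 0) := by
  have hpos : (0 : ℝ) < (((i : ℕ) : ℝ) + 1) / 2 := by positivity
  have hanti : Antitone fun N : ℕ => tailSet (V := V) i (N : ℝ) := by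
    intro m n hmn x hx
    refine lt_of_le_of_lt ?_ (show (n : ℝ) ^ ((((i : ℕ) : ℝ) + 1) / 2) < ‖x i‖ from hx)
    exact Real.rpow_le_rpow (by positivity) (by exact_mod_cast hmn) hpos.le
  have hempty : ⋂ N : ℕ, tailSet (V := V) i (N : ℝ) = ∅ := by
    refine Set.eq_empty_of_forall_notMem fun x hx => ?_
    have hlim := (tendsto_rpow_atTop hpos).comp (tendsto_natCast_atTop_atTop (R := ℝ))
    obtain ⟨N, hN⟩ := (hlim.eventually_ge_atTop ‖x i‖).exists
    exact absurd (Set.mem_iInter.1 hx N) (not_lt.2 hN)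
  have h := tendsto_setIntegral_of_antitone (μ := μ)
    (f := fun x : ∀ i, V i => ‖x i‖ ^ (q / ((i : ℕ) + 1 : ℝ)))
    (fun N : ℕ => measurableSet_tailSet (V := V) i (N : ℝ)) hanti ⟨0, (hmom i).integrableOn⟩
  simpa [hempty] using h

/-- Markov's inequality on the tail event, where `‖x⁽ᵇ⁾‖^{q/b} ≥ (t^{b/2})^{q/b} = t^{q/2}`. -/
theorem rpow_mul_tail_le (μ : Measure (∀ i, V i)) [IsProbabilityMeasure μ] (q : ℝ) (hq : 0 ≤ q)
    (hmom : HasFiniteMoment μ q) (i : Fin B) (t : ℝ) (ht : 0 ≤ t) :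
    t ^ (q / 2) * μ.real (tailSet i t) ≤
      ∫ x in tailSet i t, ‖x i‖ ^ (q / ((i : ℕ) + 1 : ℝ)) ∂μ := by
  refine setIntegral_ge_of_const_le_real (measurableSet_tailSet i t) (measure_ne_top _ _) ?_
    (hmom i).integrableOn
  intro x hx
  have hexp : t ^ (q / 2) = (t ^ ((((i : ℕ) : ℝ) + 1) / 2)) ^ (q / ((i : ℕ) + 1 : ℝ)) := by
    rw [← Real.rpow_mul ht]
    congr 1
    field_simp
  rw [hexp]
  exact Real.rpow_le_rpow (by positivity) (le_of_lt hx) (by positivity)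

end

/-- The coupling bound: replacing each of `N` independent samples `x` by `T x` changes the law of
the sample by at most `N · μ(T x ≠ x)` in total variation. -/
theorem abs_pi_sub_pi_map_le {X : Type*} [MeasurableSpace X] (μ : Measure X)
    [IsProbabilityMeasure μ] {T : X → X} (hT : Measurable T) (N : ℕ) {A : Set (Fin N → X)}
    (hA : MeasurableSet A) :
    |(Measure.pi fun _ : Fin N => μ).real A - (Measure.pi fun _ : Fin N => μ.map T).real A| ≤
      N * μ.real {x | T x ≠ x} := by
  have : IsProbabilityMeasure (μ.map T) := Measure.isProbabilityMeasure_map hT.aemeasurable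
  let F : (Fin N → X) → (Fin N → X) := fun x j => T (x j)
  have hF : Measurable F := measurable_pi_lambda _ fun j => hT.comp (measurable_pi_apply j)
  have hmap : (Measure.pi fun _ : Fin N => μ.map T) = (Measure.pi fun _ : Fin N => μ).map F :=
    (Measure.pi_map_pi fun _ => hT.aemeasurable).symm
  rw [hmap, map_measureReal_apply hF hA]
  refine (abs_measureReal_sub_le_measureReal_symmDiff hA.nullMeasurableSet
    (hF hA).nullMeasurableSet).trans ?_
  have hsub : symmDiff A (F ⁻¹' A) ⊆ ⋃ j : Fin N, Function.eval j ⁻¹' {x | T x ≠ x} := by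
    intro x hx
    by_contra h
    have hfix : F x = x := by
      funext j
      by_contra hj
      exact h (Set.mem_iUnion.2 ⟨j, hj⟩)
    simp [Set.mem_symmDiff, hfix] at hx
  refine (measureReal_mono hsub).trans ((measureReal_iUnion_fintype_le _).trans ?_)
  -- The event `T x ≠ x` need not be measurable when `X` lacks a measurable diagonal, so it is
  -- enlarged to a measurable hull of the same measure.
  have hone (j : Fin N) : (Measure.pi fun _ : Fin N => μ).real
      (Function.eval j ⁻¹' {x | T x ≠ x}) ≤ μ.real {x | T x ≠ x} := by
    have hj := (measurePreserving_eval (fun _ : Fin N => μ) j).measureReal_preimage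
      (measurableSet_toMeasurable μ {x | T x ≠ x}).nullMeasurableSet
    have hhull : μ.real (toMeasurable μ {x | T x ≠ x}) = μ.real {x | T x ≠ x} := by
      simp only [measureReal_def, measure_toMeasurable]
    rw [← hhull, ← hj]
    exact measureReal_mono (Set.preimage_mono (subset_toMeasurable _ _))
  calc _ ≤ ∑ _j : Fin N, μ.real {x | T x ≠ x} := Finset.sum_le_sum fun j _ => hone j
    _ = N * μ.real {x | T x ≠ x} := by simp

/-- Cost of truncation: if `μ` has a finite moment of order `q ≥ 2` then the total
variation distance between `μ^{⊗N}` and `(T_N μ)^{⊗N}` is `o(N^{-q/2+1})` as `N → ∞`. -/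
theorem truncation_cost {B : ℕ} (V : Fin B → Type*)
    [∀ i, NormedAddCommGroup (V i)] [∀ i, InnerProductSpace ℝ (V i)]
    [∀ i, FiniteDimensional ℝ (V i)] [∀ i, MeasurableSpace (V i)] [∀ i, BorelSpace (V i)]
    (q : ℝ) (hq : 2 ≤ q)
    (μ : Measure (∀ i, V i)) [IsProbabilityMeasure μ]
    (hmom : HasFiniteMoment μ q) :
    ∀ ε > 0, ∃ N₀ : ℕ, ∀ N : ℕ, N₀ ≤ N →
      ∀ A : Set (Fin N → ∀ i, V i), MeasurableSet A →
        (N : ℝ) ^ (q / 2 - 1) *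
            |((Measure.pi fun _ : Fin N => μ) A).toReal -
              ((Measure.pi fun _ : Fin N => μ.map (truncMap μ (N : ℝ))) A).toReal| ≤ ε := by
  intro ε hε
  have hlim : Filter.Tendsto (fun N : ℕ => ∑ i : Fin B,
      ∫ x in tailSet i (N : ℝ), ‖x i‖ ^ (q / ((i : ℕ) + 1 : ℝ)) ∂μ) Filter.atTop (nhds 0) := by
    simpa using tendsto_finsetSum Finset.univ fun i _ => tendsto_tail_integral μ q hmom i
  obtain ⟨N₀, hN₀⟩ := Filter.eventually_atTop.1 (hlim.eventually_le_const hε)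
  -- `N ≥ 1` is needed for `N ^ (q / 2 - 1) * N = N ^ (q / 2)`.
  refine ⟨max N₀ 1, fun N hN A hA => ?_⟩
  have hNpos : (0 : ℝ) < N := by exact_mod_cast (le_of_max_le_right hN : 1 ≤ N)
  have hpow : (N : ℝ) ^ (q / 2 - 1) * N = (N : ℝ) ^ (q / 2) := by
    rw [Real.rpow_sub_one hNpos.ne', div_mul_cancel₀ _ hNpos.ne']
  calc _ ≤ (N : ℝ) ^ (q / 2 - 1) * (N * ∑ i, μ.real (tailSet i (N : ℝ))) := by
        gcongr
        refine (abs_pi_sub_pi_map_le μ (measurable_truncMap μ (N : ℝ)) N hA).trans ?_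
        gcongr
        exact measureReal_ne_truncMap_le μ _
    _ = ∑ i, (N : ℝ) ^ (q / 2) * μ.real (tailSet i (N : ℝ)) := by
        rw [← mul_assoc, hpow, Finset.mul_sum]
    _ ≤ ∑ i : Fin B, ∫ x in tailSet i (N : ℝ), ‖x i‖ ^ (q / ((i : ℕ) + 1 : ℝ)) ∂μ :=
        Finset.sum_le_sum fun i _ =>
          rpow_mul_tail_le μ q (by linarith) hmom i N hNpos.le
    _ ≤ ε := hN₀ N (le_of_max_le_left hN)
end

section
/- There exists an absolute constant C > 0 with the following property. Let G be a group equipped with a σ-algebra making the multiplication map G × G → G measurable, let μ be a probability measure on G, and set μ' = (1/2)μ + (1/2)δ_1, where δ_1 is the Dirac mass at the identity. Then for every integer N > 1 and every measurable subset A ⊆ G, |(1/(2N)) ∑_{k=1}^{2N} μ'^{*k}(A) − (1/N) ∑_{k=1}^{N} μ^{*k}(A)| ≤ C · (log N)/√N, where μ^{*k} denotes the k-fold convolution power of μ. -/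
/-!
Writing `a j = μ^{*j}(A)`, the number `μ'^{*k}(A)` is `(L^k a)(0)`, where `L` is the averaging
operator `(L f)(j) = (f j + f (j + 1)) / 2` on sequences (`convPow_lazy_mconv`).  If
`F j = ∑_{i < j} a i`, then `L F - F = a / 2` and `L` commutes with the shift, so the sums telescope
(`sum_lazyOp_iterate`): `∑_{k < 2N} (L^k a)(0) = 2 (L^{2N} F)(0) = 2 𝔼 F(B)` with `B` binomial of
parameters `2N` and `1/2`.  Since `F` is 1-Lipschitz,
`|𝔼 F(B) - F(N)| ≤ 𝔼 |B - N| = O(√N)` by the variance of `B`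
(`abs_lazyOp_iterate_sub_le`).  Dividing by `N` gives a bound `O(1/√N)`, which is stronger than
`O(log N / √N)`; replacing the index range `0 ≤ k < n` by `1 ≤ k ≤ n` costs only `O(1/N)`.
-/

open MeasureTheory
open scoped ENNReal

/-- Convolution powers of a measure on a measurable monoid:
`convPow μ 0 = δ_1` and `convPow μ (k+1) = (convPow μ k) * μ`. -/
noncomputable def convPow {G : Type*} [Monoid G] [MeasurableSpace G]
    (μ : Measure G) : ℕ → Measure G
  | 0 => Measure.dirac 1
  | (k + 1) => ((convPow μ k).prod μ).map fun p => p.1 * p.2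

/-- The averaging operator `(1 + S) / 2` on real sequences, `S` being the shift.  Thus
`lazyOp^[n] f j` is the expectation of `f (j + B)` for `B` binomial with parameters `n`, `1/2`. -/
noncomputable def lazyOp (f : ℕ → ℝ) (j : ℕ) : ℝ := (f j + f (j + 1)) / 2

lemma lazyOp_iterate_succ (f : ℕ → ℝ) (n j : ℕ) :
    lazyOp^[n + 1] f j = (lazyOp^[n] f j + lazyOp^[n] f (j + 1)) / 2 := by
  rw [Function.iterate_succ_apply']
  rfl

/-- A second moment bound: the right-hand side is the expectation of `α (j + B - c) ^ 2 + β` for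
`B` binomial with parameters `n`, `1/2`. -/
lemma abs_lazyOp_iterate_sub_le (f : ℕ → ℝ) (c d α β : ℝ)
    (h : ∀ j : ℕ, |f j - d| ≤ α * ((j : ℝ) - c) ^ 2 + β) (n j : ℕ) :
    |lazyOp^[n] f j - d| ≤ α * (((j : ℝ) + n / 2 - c) ^ 2 + n / 4) + β := by
  induction n generalizing j with
  | zero => simpa using h j
  | succ n ih =>
    have h1 := abs_le.1 (ih j)
    have h2 := abs_le.1 (ih (j + 1))
    rw [lazyOp_iterate_succ]
    push_cast at *
    have e : α * (((j : ℝ) + (n + 1) / 2 - c) ^ 2 + (n + 1) / 4) + β =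
        ((α * (((j : ℝ) + n / 2 - c) ^ 2 + n / 4) + β) +
          (α * (((j : ℝ) + 1 + n / 2 - c) ^ 2 + n / 4) + β)) / 2 := by ring
    rw [e, abs_le]
    constructor <;> linarith [h1.1, h1.2, h2.1, h2.2]

lemma lazyOp_iterate_shift_sub (F a : ℕ → ℝ) (h : ∀ j, F (j + 1) - F j = a j) (n j : ℕ) :
    lazyOp^[n] F (j + 1) - lazyOp^[n] F j = lazyOp^[n] a j := by
  induction n generalizing j with
  | zero => exact h j
  | succ n ih =>
    simp only [lazyOp_iterate_succ]
    linarith [ih j, ih (j + 1)]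

lemma sum_lazyOp_iterate (F a : ℕ → ℝ) (h : ∀ j, F (j + 1) - F j = a j) (n j : ℕ) :
    ∑ k ∈ Finset.range n, lazyOp^[k] a j = 2 * (lazyOp^[n] F j - F j) := by
  induction n with
  | zero => simp
  | succ n ih =>
    rw [Finset.sum_range_succ, ih, lazyOp_iterate_succ]
    linarith [lazyOp_iterate_shift_sub F a h n j]

lemma sum_Icc_one_eq (u : ℕ → ℝ) (n : ℕ) :
    ∑ k ∈ Finset.Icc 1 n, u k = ∑ k ∈ Finset.range n, u k + u n - u 0 := by
  induction n with
  | zero => simp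
  | succ n ih =>
    rw [Finset.sum_Icc_succ_top (by omega), ih, Finset.sum_range_succ]
    ring

lemma toReal_apply_mem_Icc {G : Type*} [MeasurableSpace G] (ν : Measure G) [IsProbabilityMeasure ν]
    (A : Set G) :
    (ν A).toReal ∈ Set.Icc (0 : ℝ) 1 :=
  ⟨ENNReal.toReal_nonneg, measureReal_le_one⟩

section ConvPow

variable {G : Type*} [Monoid G] [MeasurableSpace G]

lemma convPow_succ (μ : Measure G) (k : ℕ) :
    convPow μ (k + 1) = convPow μ k ∗ₘ μ := rfl

variable [MeasurableMul₂ G]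

instance convPow_isProbabilityMeasure (μ : Measure G) [IsProbabilityMeasure μ] (k : ℕ) :
    IsProbabilityMeasure (convPow μ k) := by
  induction k with
  | zero => exact Measure.dirac.isProbabilityMeasure
  | succ k ih => rw [convPow_succ]; infer_instance

lemma convPow_succ' (μ : Measure G) [IsProbabilityMeasure μ] (k : ℕ) :
    convPow μ (k + 1) = μ ∗ₘ convPow μ k := by
  induction k with
  | zero =>
    rw [convPow_succ]
    change Measure.dirac 1 ∗ₘ μ = μ ∗ₘ Measure.dirac 1
    rw [Measure.dirac_one_mconv, Measure.mconv_dirac_one]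
  | succ k ih => rw [convPow_succ, ih, Measure.mconv_assoc, ← convPow_succ, ih]

/-- The lazy version `(μ + δ_1) / 2` of `μ`. -/
noncomputable abbrev lazyMeasure (μ : Measure G) : Measure G :=
  (2 : ℝ≥0∞)⁻¹ • μ + (2 : ℝ≥0∞)⁻¹ • Measure.dirac (1 : G)

instance lazyMeasure_isProbabilityMeasure (μ : Measure G) [IsProbabilityMeasure μ] :
    IsProbabilityMeasure (lazyMeasure μ) :=
  ⟨by simp [lazyMeasure, ENNReal.inv_two_add_inv_two]⟩

/-- Convolving with a further power `μ^{*j}` makes the binomial recursion go through by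
induction on `k`; the case `j = 0` describes `μ'^{*k}`. -/
lemma convPow_lazy_mconv (μ : Measure G) [IsProbabilityMeasure μ] (A : Set G) (k j : ℕ) :
    ((convPow (lazyMeasure μ) k ∗ₘ convPow μ j) A).toReal =
      lazyOp^[k] (fun i => (convPow μ i A).toReal) j := by
  induction k generalizing j with
  | zero =>
    change ((Measure.dirac 1 ∗ₘ convPow μ j) A).toReal = _
    rw [Measure.dirac_one_mconv]
    rfl
  | succ k ih =>
    have e : convPow (lazyMeasure μ) (k + 1) ∗ₘ convPow μ j =
        (2 : ℝ≥0∞)⁻¹ • (convPow (lazyMeasure μ) k ∗ₘ convPow μ (j + 1)) +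
        (2 : ℝ≥0∞)⁻¹ • (convPow (lazyMeasure μ) k ∗ₘ convPow μ j) := by
      rw [convPow_succ, Measure.mconv_assoc, Measure.add_mconv, Measure.mconv_smul_left,
        Measure.mconv_smul_left, Measure.dirac_one_mconv, ← convPow_succ', Measure.mconv_add,
        Measure.mconv_smul_right, Measure.mconv_smul_right]
    rw [e, lazyOp_iterate_succ, ← ih j, ← ih (j + 1), Measure.add_apply, Measure.smul_apply,
      Measure.smul_apply, smul_eq_mul, smul_eq_mul, ENNReal.toReal_add (by finiteness)
      (by finiteness), ENNReal.toReal_mul, ENNReal.toReal_mul]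
    simp only [ENNReal.toReal_inv, ENNReal.toReal_ofNat]
    ring

lemma convPow_lazy_apply (μ : Measure G) [IsProbabilityMeasure μ] (A : Set G) (k : ℕ) :
    (convPow (lazyMeasure μ) k A).toReal =
      lazyOp^[k] (fun i => (convPow μ i A).toReal) 0 := by
  rw [← convPow_lazy_mconv]
  change _ = ((convPow (lazyMeasure μ) k ∗ₘ Measure.dirac 1) A).toReal
  rw [Measure.mconv_dirac_one]

end ConvPow

lemma abs_sum_range_sub_le (a : ℕ → ℝ) (ha : ∀ j, a j ∈ Set.Icc (0 : ℝ) 1) (m n : ℕ) :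
    |∑ i ∈ Finset.range m, a i - ∑ i ∈ Finset.range n, a i| ≤ |(m : ℝ) - n| := by
  wlog hmn : n ≤ m generalizing m n
  · rw [abs_sub_comm, abs_sub_comm (m : ℝ)]
    exact this n m (by omega)
  obtain ⟨d, rfl⟩ := Nat.exists_eq_add_of_le hmn
  rw [Finset.sum_range_add, add_sub_cancel_left, Nat.cast_add, add_sub_cancel_left, Nat.abs_cast,
    abs_of_nonneg (Finset.sum_nonneg fun i _ => (ha _).1)]
  simpa using Finset.sum_le_sum (s := Finset.range d) fun i _ => (ha (n + i)).2

/-- With `B` binomial of parameters `2N`, `1/2` and `F` the partial sums of a `[0, 1]`-valued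
sequence, `𝔼 F(B)` is within `O(√N)` of `F(N)`, because `F` is 1-Lipschitz and `𝔼 B = N`. -/
lemma abs_lazyOp_partialSum_sub_le (a : ℕ → ℝ) (ha : ∀ j, a j ∈ Set.Icc (0 : ℝ) 1)
    (N : ℕ) (hN : 0 < N) :
    |lazyOp^[2 * N] (fun m => ∑ i ∈ Finset.range m, a i) 0 - ∑ i ∈ Finset.range N, a i| ≤
      3 / 4 * √N := by
  have hs : 0 < √(N : ℝ) := Real.sqrt_pos.2 (by exact_mod_cast hN)
  have hs2 : √(N : ℝ) ^ 2 = N := Real.sq_sqrt (by positivity)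
  -- AM-GM in the form `|x| ≤ x² / (2s) + s / 2` with `s = √N`, so that only a second moment is used
  have key := abs_lazyOp_iterate_sub_le (fun m => ∑ i ∈ Finset.range m, a i) N
    (∑ i ∈ Finset.range N, a i) (1 / (2 * √N)) (√N / 2) (fun j => by
      refine (abs_sum_range_sub_le a ha j N).trans ?_
      have : 1 / (2 * √(N : ℝ)) * ((j : ℝ) - N) ^ 2 + √N / 2 - |(j : ℝ) - N| =
          (|(j : ℝ) - N| - √N) ^ 2 / (2 * √N) := by
        rw [← sq_abs ((j : ℝ) - N)]
        field_simp
        ring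
      have : 0 ≤ (|(j : ℝ) - N| - √N) ^ 2 / (2 * √(N : ℝ)) := by positivity
      linarith) (2 * N) 0
  refine key.trans (le_of_eq ?_)
  push_cast
  rw [← hs2, Real.sqrt_sq hs.le]
  field_simp
  ring

/-- Reduction to the aperiodic case: there is an absolute constant `C > 0` such that for
any measurable group `G`, any probability measure `μ` on `G` and its lazy version
`μ' = (1/2)μ + (1/2)δ_1`, the Cesàro averages of the convolution powers of `μ'` up to
time `2N` and of `μ` up to time `N` differ by at most `C log N / √N` in total variation. -/
theorem cesaro_lazy_comparison : ∃ C : ℝ, 0 < C ∧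
    ∀ (G : Type*) [Group G] [MeasurableSpace G] [MeasurableMul₂ G]
      (μ : Measure G), IsProbabilityMeasure μ →
      ∀ N : ℕ, 1 < N → ∀ A : Set G, MeasurableSet A →
        |(1 / (2 * N : ℝ)) * ∑ k ∈ Finset.Icc 1 (2 * N),
            ((convPow ((2 : ℝ≥0∞)⁻¹ • μ + (2 : ℝ≥0∞)⁻¹ • Measure.dirac (1 : G)) k) A).toReal -
          (1 / (N : ℝ)) * ∑ k ∈ Finset.Icc 1 N, ((convPow μ k) A).toReal| ≤
        C * Real.log N / Real.sqrt N := by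
  refine ⟨6, by norm_num, ?_⟩
  intro G _ _ _ μ hμ N hN A _
  set a : ℕ → ℝ := fun i => (convPow μ i A).toReal with ha_def
  have ha : ∀ j, a j ∈ Set.Icc (0 : ℝ) 1 := fun j => toReal_apply_mem_Icc _ A
  have hu : ∀ k, lazyOp^[k] a 0 ∈ Set.Icc (0 : ℝ) 1 := fun k => by
    rw [← convPow_lazy_apply]
    exact toReal_apply_mem_Icc _ A
  have key := abs_lazyOp_partialSum_sub_le a ha N (by omega)
  have tel := sum_lazyOp_iterate (fun m => ∑ i ∈ Finset.range m, a i) a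
    (fun j => by simp [Finset.sum_range_succ]) (2 * N) 0
  rw [Finset.sum_congr rfl fun k _ => convPow_lazy_apply μ A k,
    sum_Icc_one_eq (fun k => lazyOp^[k] a 0), sum_Icc_one_eq a, tel]
  simp only [Finset.range_zero, Finset.sum_empty, sub_zero]
  set X := lazyOp^[2 * N] (fun m => ∑ i ∈ Finset.range m, a i) 0
  set Y := ∑ i ∈ Finset.range N, a i
  have hN1 : (1 : ℝ) ≤ N := by exact_mod_cast hN.le
  have hs1 : 1 ≤ √(N : ℝ) := Real.one_le_sqrt.2 hN1
  have hs2 : √(N : ℝ) ^ 2 = N := Real.sq_sqrt (by positivity)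
  have hlog : 1 / 2 ≤ Real.log N := by
    have h2 : Real.log 2 ≤ Real.log N :=
      Real.log_le_log (by norm_num) (by exact_mod_cast hN)
    linarith [Real.log_two_gt_d9]
  set u := lazyOp^[2 * N] a 0
  set v := lazyOp^[0] a 0
  have hb : |(X - Y) + ((u - v) / 2 - (a N - a 0))| ≤ 3 * √N := by
    have h1 := abs_le.1 key
    have h2 : u ∈ Set.Icc (0 : ℝ) 1 := hu _
    have h3 : v ∈ Set.Icc (0 : ℝ) 1 := hu _
    have h4 := ha N
    have h5 := ha 0
    simp only [Set.mem_Icc] at h2 h3 h4 h5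
    rw [abs_le]
    constructor <;> linarith
  have e : 1 / (2 * (N : ℝ)) * (2 * X + u - v) - 1 / (N : ℝ) * (Y + a N - a 0) =
      ((X - Y) + ((u - v) / 2 - (a N - a 0))) / N := by
    field_simp
    ring
  rw [e, abs_div, abs_of_pos (by linarith : (0 : ℝ) < N)]
  calc _ ≤ 3 * √(N : ℝ) / N := by gcongr
    _ = 3 / √(N : ℝ) := by
      nth_rewrite 2 [← hs2]
      field_simp
    _ ≤ 6 * Real.log N / √(N : ℝ) := by gcongr; linarith
end

section
/- There exists a constant C > 0 such that for every integer N ≥ 2, ∑_{i=1}^{2N} | (1/2) ∑_{k=1}^{2N} C(k, i) · 2^{−k} − [i ≤ N] | ≤ C · √N · log N, where C(k, i) is the binomial coefficient (equal to 0 when i > k) and [i ≤ N] equals 1 if i ≤ N and 0 otherwise. -/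
/-!
Writing `S_n` for a binomial variable with parameters `n` and `1/2`, half the expected occupation
time of `i` up to time `M` is exactly `ℙ(i < S_{M+1})`: passing from `S_M` to `S_{M+1}` raises the
probability of exceeding `i` by `ℙ(S_M = i) / 2` (`half_occupation_eq_tail`). With `M = 2N`, each
summand is therefore at most `𝔼 |[i < S] - [i ≤ N]|`, where `S = S_{2N+1}`. The integers `i` with
`[i < S] ≠ [i ≤ N]` number at most `|S - (N + 1)|` (`sum_abs_indicator_sub_le`), so the whole sum
is at most `𝔼 |S - (N + 1)|`. Since `𝔼 (S - (N + 1))² = (N + 1) / 2` (`sum_choose_mul_sq`), this is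
at most `√N`; the factor `log N ≥ log 2 > 1/2` only costs a constant.
-/

/-- Conditioning the symmetric binomial law on its last step. -/
lemma sum_choose_succ_mul_eq (φ : ℕ → ℝ) (n : ℕ) :
    ∑ j ∈ Finset.range (n + 2), ((n + 1).choose j : ℝ) * φ j =
      ∑ j ∈ Finset.range (n + 1), (n.choose j : ℝ) * (φ j + φ (j + 1)) := by
  rw [Finset.sum_choose_succ_mul (fun j _ => φ j) n, ← Finset.sum_add_distrib]
  exact Finset.sum_congr rfl fun j _ => by ring

/-- Half the expected occupation time of `i` up to time `M` is `ℙ(i < S_{M+1})`. -/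
lemma half_occupation_eq_tail (i M : ℕ) :
    (1 / 2 : ℝ) * ∑ k ∈ Finset.range (M + 1), (k.choose i : ℝ) / 2 ^ k =
      ∑ j ∈ Finset.range (M + 2),
        ((M + 1).choose j : ℝ) / 2 ^ (M + 1) * (if i < j then 1 else 0) := by
  -- One step of the walk: the tail grows by the mass of the site `i`.
  have step (n : ℕ) : ∑ j ∈ Finset.range (n + 2), ((n + 1).choose j : ℝ) *
      (if i < j then (1 : ℝ) else 0) =
      2 * ∑ j ∈ Finset.range (n + 1), (n.choose j : ℝ) * (if i < j then (1 : ℝ) else 0)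
        + n.choose i := by
    have hi : (n.choose i : ℝ) =
        ∑ j ∈ Finset.range (n + 1), (n.choose j : ℝ) * (if i = j then (1 : ℝ) else 0) := by
      simp only [mul_ite, mul_one, mul_zero, Finset.sum_ite_eq, Finset.mem_range]
      split_ifs with h
      · rfl
      · rw [Nat.choose_eq_zero_of_lt (by omega), Nat.cast_zero]
    rw [sum_choose_succ_mul_eq, hi, Finset.mul_sum, ← Finset.sum_add_distrib]
    refine Finset.sum_congr rfl fun j _ => ?_
    rcases lt_trichotomy i j with h | h | h
    · simp [h, h.ne, Nat.lt_succ_of_lt h]; ring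
    · simp [h]
    · simp [h.ne', not_lt.2 h.le, show ¬ i < j + 1 by omega]
  have pull (n : ℕ) : ∑ j ∈ Finset.range (n + 1),
      (n.choose j : ℝ) / 2 ^ n * (if i < j then (1 : ℝ) else 0) =
      (∑ j ∈ Finset.range (n + 1), (n.choose j : ℝ) * (if i < j then (1 : ℝ) else 0)) / 2 ^ n := by
    rw [Finset.sum_div]
    exact Finset.sum_congr rfl fun j _ => by ring
  rw [pull]
  induction M with
  | zero => rw [step]; simp; ring
  | succ M ih =>
    rw [Finset.sum_range_succ, mul_add, ih, step (M + 1)]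
    field_simp
    ring

/-- Second moment of the symmetric binomial law about an arbitrary point: `2 S_n - n` has mean `0`
and variance `n`. -/
lemma sum_choose_mul_sq (n : ℕ) (a : ℝ) :
    ∑ j ∈ Finset.range (n + 1), (n.choose j : ℝ) * (2 * j - n - a) ^ 2 =
      2 ^ n * (n + a ^ 2) := by
  induction n generalizing a with
  | zero => simp
  | succ n ih =>
    rw [sum_choose_succ_mul_eq (fun j => (2 * (j : ℝ) - (n + 1 : ℕ) - a) ^ 2) n]
    have h1 := ih (a + 1)
    have h2 := ih (a - 1)
    have e1 : ∀ j : ℕ, 2 * (j : ℝ) - (n + 1 : ℕ) - a = 2 * j - n - (a + 1) := fun j => by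
      push_cast; ring
    have e2 : ∀ j : ℕ, 2 * ((j + 1 : ℕ) : ℝ) - n - (a + 1) = 2 * j - n - (a - 1) := fun j => by
      push_cast; ring
    simp only [e1, e2]
    simp_rw [mul_add ((n.choose _ : ℕ) : ℝ)]
    rw [Finset.sum_add_distrib, h1, h2]
    push_cast
    ring

lemma sum_abs_indicator_sub_le (N j : ℕ) (s : Finset ℕ) :
    ∑ i ∈ s, |(if i < j then (1 : ℝ) else 0) - (if i ≤ N then 1 else 0)| ≤
      |(j : ℝ) - (N + 1)| := by
  have hcard : ∑ i ∈ s, |(if i < j then (1 : ℝ) else 0) - (if i ≤ N then 1 else 0)| =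
      ((s.filter fun i => ¬ (i < j ↔ i ≤ N)).card : ℝ) := by
    rw [Finset.card_filter, Nat.cast_sum]
    refine Finset.sum_congr rfl fun i _ => ?_
    by_cases h1 : i < j <;> by_cases h2 : i ≤ N <;> simp [h1, h2]
  rw [hcard]
  rcases le_total j (N + 1) with h | h
  · have hsub : (s.filter fun i => ¬ (i < j ↔ i ≤ N)) ⊆ Finset.Ico j (N + 1) := by
      intro i hi
      simp only [Finset.mem_filter, Finset.mem_Ico] at hi ⊢
      omega
    have := Finset.card_le_card hsub
    rw [Nat.card_Ico] at this
    rw [abs_sub_comm]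
    refine le_trans ?_ (le_abs_self _)
    have h3 : ((N + 1 - j : ℕ) : ℝ) = (N + 1 : ℝ) - j := by push_cast [h]; ring
    rw [← h3]
    exact_mod_cast this
  · have hsub : (s.filter fun i => ¬ (i < j ↔ i ≤ N)) ⊆ Finset.Ico (N + 1) j := by
      intro i hi
      simp only [Finset.mem_filter, Finset.mem_Ico] at hi ⊢
      omega
    have := Finset.card_le_card hsub
    rw [Nat.card_Ico] at this
    refine le_trans ?_ (le_abs_self _)
    have h3 : ((j - (N + 1) : ℕ) : ℝ) = (j : ℝ) - (N + 1) := by push_cast [h]; ring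
    rw [← h3]
    exact_mod_cast this

/-- `𝔼 |S_{2N+1} - (N + 1)| ≤ √N`. -/
lemma sum_choose_mul_abs_le (N : ℕ) (hN : 1 ≤ N) :
    ∑ j ∈ Finset.range (2 * N + 2),
      ((2 * N + 1).choose j : ℝ) / 2 ^ (2 * N + 1) * |(j : ℝ) - (N + 1)| ≤ √N := by
  have hN' : (1 : ℝ) ≤ N := by exact_mod_cast hN
  have hs : 0 < √(N : ℝ) := Real.sqrt_pos.2 (by linarith)
  have hss : √(N : ℝ) * √N = N := Real.mul_self_sqrt (by linarith)
  have hmass : ∑ j ∈ Finset.range (2 * N + 2), ((2 * N + 1).choose j : ℝ) = 2 ^ (2 * N + 1) := by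
    exact_mod_cast Nat.sum_range_choose (2 * N + 1)
  have hsq := sum_choose_mul_sq (2 * N + 1) 1
  -- The inequality `√N |x| ≤ (x² + N) / 2`, averaged, replaces Cauchy–Schwarz.
  refine le_of_mul_le_mul_left ?_ hs
  rw [hss, Finset.mul_sum]
  calc ∑ j ∈ Finset.range (2 * N + 2),
        √(N : ℝ) * (((2 * N + 1).choose j : ℝ) / 2 ^ (2 * N + 1) * |(j : ℝ) - (N + 1)|)
      ≤ ∑ j ∈ Finset.range (2 * N + 2), (1 / (8 * 2 ^ (2 * N + 1)) *
          (((2 * N + 1).choose j : ℝ) * (2 * j - (2 * N + 1 : ℕ) - 1) ^ 2) +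
          N / (2 * 2 ^ (2 * N + 1)) * ((2 * N + 1).choose j : ℝ)) := by
        refine Finset.sum_le_sum fun j _ => ?_
        have key : √(N : ℝ) * |(j : ℝ) - (N + 1)| ≤ (((j : ℝ) - (N + 1)) ^ 2 + N) / 2 := by
          nlinarith [sq_nonneg (√(N : ℝ) - |(j : ℝ) - (N + 1)|), sq_abs ((j : ℝ) - (N + 1))]
        calc _ = ((2 * N + 1).choose j : ℝ) / 2 ^ (2 * N + 1) *
              (√(N : ℝ) * |(j : ℝ) - (N + 1)|) := by ring
          _ ≤ ((2 * N + 1).choose j : ℝ) / 2 ^ (2 * N + 1) *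
              ((((j : ℝ) - (N + 1)) ^ 2 + N) / 2) := by gcongr
          _ = _ := by push_cast; field_simp; ring
    _ = (N + 1) / 4 + N / 2 := by
        rw [Finset.sum_add_distrib, ← Finset.mul_sum, ← Finset.mul_sum, hsq, hmass]
        push_cast
        field_simp
        ring
    _ ≤ N := by linarith

/-- Key arithmetic estimate: for the lazy increasing walk, half the expected occupation
time of site `i` up to time `2N` is close to the indicator of `i ≤ N`, summably in `i`:
`∑_{i=1}^{2N} |(1/2) ∑_{k=1}^{2N} C(k,i) 2^{-k} - [i ≤ N]| ≤ C √N log N`. -/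
theorem occupation_time_estimate : ∃ C : ℝ, 0 < C ∧
    ∀ N : ℕ, 2 ≤ N →
      ∑ i ∈ Finset.Icc 1 (2 * N),
          |(1 / 2 : ℝ) * (∑ k ∈ Finset.Icc 1 (2 * N), (Nat.choose k i : ℝ) / 2 ^ k) -
            (if i ≤ N then 1 else 0)| ≤
        C * Real.sqrt N * Real.log N := by
  refine ⟨2, two_pos, fun N hN => ?_⟩
  have hmass : ∑ j ∈ Finset.range (2 * N + 2),
      ((2 * N + 1).choose j : ℝ) / 2 ^ (2 * N + 1) = 1 := by
    rw [← Finset.sum_div, div_eq_one_iff_eq (by positivity)]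
    exact_mod_cast Nat.sum_range_choose (2 * N + 1)
  have hterm : ∀ i ∈ Finset.Icc 1 (2 * N),
      |(1 / 2 : ℝ) * (∑ k ∈ Finset.Icc 1 (2 * N), (Nat.choose k i : ℝ) / 2 ^ k) -
        (if i ≤ N then 1 else 0)| ≤
      ∑ j ∈ Finset.range (2 * N + 2), ((2 * N + 1).choose j : ℝ) / 2 ^ (2 * N + 1) *
        |(if i < j then (1 : ℝ) else 0) - (if i ≤ N then 1 else 0)| := by
    intro i hi
    have hi1 : 1 ≤ i := (Finset.mem_Icc.1 hi).1
    -- As `i ≥ 1`, the term `k = 0` vanishes.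
    have h0 : ∑ k ∈ Finset.Icc 1 (2 * N), (Nat.choose k i : ℝ) / 2 ^ k =
        ∑ k ∈ Finset.range (2 * N + 1), (Nat.choose k i : ℝ) / 2 ^ k := by
      refine Finset.sum_subset (fun k hk => ?_) fun k hk hk' => ?_
      · simp only [Finset.mem_Icc, Finset.mem_range] at hk ⊢
        omega
      · simp only [Finset.mem_Icc, Finset.mem_range] at hk hk'
        rw [Nat.choose_eq_zero_of_lt (by omega)]
        simp
    have h1 : (1 / 2 : ℝ) * (∑ k ∈ Finset.Icc 1 (2 * N), (Nat.choose k i : ℝ) / 2 ^ k) -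
        (if i ≤ N then 1 else 0) =
        ∑ j ∈ Finset.range (2 * N + 2), ((2 * N + 1).choose j : ℝ) / 2 ^ (2 * N + 1) *
          ((if i < j then (1 : ℝ) else 0) - (if i ≤ N then 1 else 0)) := by
      simp only [mul_sub, Finset.sum_sub_distrib]
      rw [h0, half_occupation_eq_tail, ← Finset.sum_mul, hmass, one_mul]
    rw [h1]
    refine (Finset.abs_sum_le_sum_abs _ _).trans (le_of_eq ?_)
    refine Finset.sum_congr rfl fun j _ => ?_
    rw [abs_mul, abs_of_nonneg (by positivity)]
  have hlog : (1 : ℝ) ≤ 2 * Real.log N := by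
    have h2 : Real.log 2 ≤ Real.log N := Real.log_le_log two_pos (by exact_mod_cast hN)
    linarith [Real.log_two_gt_d9]
  calc _ ≤ _ := Finset.sum_le_sum hterm
    _ = ∑ j ∈ Finset.range (2 * N + 2), ((2 * N + 1).choose j : ℝ) / 2 ^ (2 * N + 1) *
        ∑ i ∈ Finset.Icc 1 (2 * N),
          |(if i < j then (1 : ℝ) else 0) - (if i ≤ N then 1 else 0)| := by
        rw [Finset.sum_comm]
        simp only [Finset.mul_sum]
    _ ≤ ∑ j ∈ Finset.range (2 * N + 2),
        ((2 * N + 1).choose j : ℝ) / 2 ^ (2 * N + 1) * |(j : ℝ) - (N + 1)| := by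
        gcongr
        exact sum_abs_indicator_sub_le _ _ _
    _ ≤ √N := sum_choose_mul_abs_le N (by omega)
    _ ≤ 2 * Real.sqrt N * Real.log N := by
        nlinarith [Real.sqrt_nonneg (N : ℝ)]
end
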